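/- Fix an integer τ ≥ 1 and set α = 1/(16 L τ). For any sampling sequence, the SAG iterates satisfy ‖x_k‖ ≤ B for every k with 0 ≤ k ≤ τ. -/

import Mathlib

/-!
The SAG direction is the average of the stored gradients *after* the sampled one has been
refreshed. As long as the iterates stay in the ball of radius `B`, every stored gradient is zero
or is evaluated within distance `2 * B` of one of its zeros, hence has norm at most `2 * L * B`.
Each step therefore has length at most `2 * L * |α| * B`, and `τ` such steps starting from the
origin cannot leave the ball when `2 * L * |α| * τ ≤ 1`.
-/

open scoped NNReal

theorem gradient_eq_zero_of_isLocalMin {E : Type*} [NormedAddCommGroup E] [InnerProductSpace ℝ E]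
    [CompleteSpace E] {f : E → ℝ} {a : E} (ha : IsLocalMin f a) : gradient f a = 0 := by
  rw [gradient, ha.fderiv_eq_zero, map_zero]

theorem norm_le_of_lipschitzWith_of_eq_zero {E F : Type*} [SeminormedAddCommGroup E]
    [SeminormedAddCommGroup F] {G : E → F} {L : ℝ≥0} {B : ℝ} {y z : E} (hG : LipschitzWith L G)
    (hGz : G z = 0) (hz : ‖z‖ ≤ B) (hy : ‖y‖ ≤ B) : ‖G y‖ ≤ 2 * L * B := by
  calc ‖G y‖ = ‖G y - G z‖ := by rw [hGz, sub_zero]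
    _ ≤ L * ‖y - z‖ := hG.norm_sub_le y z
    _ ≤ L * (B + B) := by gcongr; exact norm_sub_le_of_le hy hz
    _ = 2 * L * B := by ring

theorem norm_inv_card_smul_sum_le {ι E : Type*} [Fintype ι] [Nonempty ι]
    [SeminormedAddCommGroup E] [NormedSpace ℝ E] {v : ι → E} {C : ℝ} (hv : ∀ i, ‖v i‖ ≤ C) :
    ‖(Fintype.card ι : ℝ)⁻¹ • ∑ i, v i‖ ≤ C := by
  have hcard : (0 : ℝ) < Fintype.card ι := by exact_mod_cast Fintype.card_pos
  rw [norm_smul, norm_inv, Real.norm_natCast, inv_mul_le_iff₀ hcard]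
  simpa using norm_sum_le_of_le Finset.univ fun i _ => hv i

/-- `IsSAGRun G idx α x g h` says that `x` is the sequence of SAG iterates started at the origin
with step size `α` and sampled indices `idx`, that `g` is the sequence of its directions, and that
`h i k` is the value of component `i` stored before iteration `k`. The components `G i` are
arbitrary vector fields; in the optimization method they are the gradients of the summands. The
table `h` is described by its update rule rather than by the times of the last samples. -/
structure IsSAGRun {ι E : Type*} [Fintype ι] [DecidableEq ι] [AddCommGroup E] [Module ℝ E]
    (G : ι → E → E) (idx : ℕ → ι) (α : ℝ) (x g : ℕ → E) (h : ι → ℕ → E) : Prop where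
  iterate_zero : x 0 = 0
  table_zero : ∀ i, h i 0 = 0
  table_succ : ∀ i k, h i (k + 1) = if idx k = i then G i (x k) else h i k
  direction_eq : ∀ k, g k = (Fintype.card ι : ℝ)⁻¹ • (∑ i, h i k)
    + (Fintype.card ι : ℝ)⁻¹ • (G (idx k) (x k) - h (idx k) k)
  iterate_succ : ∀ k, x (k + 1) = x k - α • g k

namespace IsSAGRun

section Module

variable {ι E : Type*} [Fintype ι] [DecidableEq ι] [AddCommGroup E] [Module ℝ E]
  {G : ι → E → E} {idx : ℕ → ι} {α : ℝ} {x g : ℕ → E} {h : ι → ℕ → E}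

theorem sum_table_succ (hrun : IsSAGRun G idx α x g h) (k : ℕ) :
    ∑ i, h i (k + 1) = ∑ i, h i k + (G (idx k) (x k) - h (idx k) k) := by
  have table_increment (i : ι) :
      h i (k + 1) - h i k = if idx k = i then G i (x k) - h i k else 0 := by
    rw [hrun.table_succ]
    split_ifs <;> simp
  rw [← sub_eq_iff_eq_add', ← Finset.sum_sub_distrib]
  simp [table_increment]

theorem direction_eq_average_table_succ (hrun : IsSAGRun G idx α x g h) (k : ℕ) :
    g k = (Fintype.card ι : ℝ)⁻¹ • ∑ i, h i (k + 1) := by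
  rw [hrun.direction_eq, hrun.sum_table_succ, smul_add]

end Module

section Normed

variable {ι E : Type*} [Fintype ι] [DecidableEq ι] [SeminormedAddCommGroup E] [NormedSpace ℝ E]
  {G : ι → E → E} {idx : ℕ → ι} {α C : ℝ} {x g : ℕ → E} {h : ι → ℕ → E} {k : ℕ}

theorem norm_table_le (hrun : IsSAGRun G idx α x g h) (hC : 0 ≤ C)
    (hG : ∀ j < k, ∀ i, ‖G i (x j)‖ ≤ C) (i : ι) : ‖h i k‖ ≤ C := by
  induction k with
  | zero => rwa [hrun.table_zero, norm_zero]
  | succ k ih =>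
    rw [hrun.table_succ]
    split_ifs
    · exact hG k k.lt_succ_self i
    · exact ih fun j hj => hG j (hj.trans k.lt_succ_self)

theorem norm_direction_le (hrun : IsSAGRun G idx α x g h)
    (hG : ∀ j ≤ k, ∀ i, ‖G i (x j)‖ ≤ C) : ‖g k‖ ≤ C := by
  have : Nonempty ι := ⟨idx 0⟩
  have hC : 0 ≤ C := (norm_nonneg _).trans (hG k le_rfl (idx k))
  rw [hrun.direction_eq_average_table_succ]
  exact norm_inv_card_smul_sum_le <|
    hrun.norm_table_le hC fun j hj => hG j (Nat.le_of_lt_succ hj)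

theorem norm_iterate_le (hrun : IsSAGRun G idx α x g h)
    (hG : ∀ j < k, ∀ i, ‖G i (x j)‖ ≤ C) : ‖x k‖ ≤ k * (|α| * C) := by
  have step_length_le {j : ℕ} (hj : j < k) : dist (x j) (x (j + 1)) ≤ |α| * C := by
    have hgj : ‖g j‖ ≤ C := hrun.norm_direction_le fun l hl => hG l (hl.trans_lt hj)
    rw [hrun.iterate_succ, dist_self_sub_right, norm_smul, Real.norm_eq_abs]
    gcongr
  simpa [hrun.iterate_zero] using dist_le_range_sum_of_dist_le k step_length_le

end Normed

end IsSAGRun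

theorem sag_bounded_iterates_general {ι E : Type*} [Fintype ι] [DecidableEq ι]
    [SeminormedAddCommGroup E] [NormedSpace ℝ E] {G : ι → E → E} {idx : ℕ → ι} {α : ℝ}
    {x g : ℕ → E} {h : ι → ℕ → E} (hrun : IsSAGRun G idx α x g h) {L : ℝ≥0}
    (hG : ∀ i, LipschitzWith L (G i)) {z : ι → E} (hGz : ∀ i, G i (z i) = 0) {B : ℝ}
    (hz : ∀ i, ‖z i‖ ≤ B) {τ : ℕ} (hα : 2 * L * |α| * τ ≤ 1) : ∀ k ≤ τ, ‖x k‖ ≤ B := by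
  have hB : 0 ≤ B := (norm_nonneg _).trans (hz (idx 0))
  intro k
  induction k using Nat.strong_induction_on with
  | h k ih =>
    intro hk
    have norm_component_le (j : ℕ) (hj : j < k) (i : ι) : ‖G i (x j)‖ ≤ 2 * L * B :=
      norm_le_of_lipschitzWith_of_eq_zero (hG i) (hGz i) (hz i) (ih j hj (hj.le.trans hk))
    calc ‖x k‖ ≤ k * (|α| * (2 * L * B)) := hrun.norm_iterate_le norm_component_le
      _ ≤ τ * (|α| * (2 * L * B)) := by gcongr
      _ = 2 * L * |α| * τ * B := by ring
      _ ≤ B := mul_le_of_le_one_left hB hα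

/- STATEMENT 8 (SAG bounded iterates during the burn-in period). -/
theorem sag_bounded_iterates (d N : ℕ) (hd : 1 ≤ d) (hN : 1 ≤ N) (L : ℝ) (hL : 0 < L)
    (fi : Fin N → EuclideanSpace ℝ (Fin d) → ℝ)
    (hdiff : ∀ i, Differentiable ℝ (fi i))
    (hsmooth : ∀ i x y, ‖gradient (fi i) x - gradient (fi i) y‖ ≤ L * ‖x - y‖)
    (f : EuclideanSpace ℝ (Fin d) → ℝ)
    (hf : ∀ z, f z = (∑ i, fi i z) / N)
    (xstar : EuclideanSpace ℝ (Fin d)) (hmin : ∀ y, f xstar ≤ f y)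
    (xistar : Fin N → EuclideanSpace ℝ (Fin d))
    (hxi : ∀ i y, fi i (xistar i) ≤ fi i y)
    (B : ℝ) (hB : B = max ‖xstar‖ (⨆ i, ‖xistar i‖))
    (τ : ℕ) (hτ : 1 ≤ τ)
    (idx : ℕ → Fin N) (α : ℝ) (hα : α = 1 / (16 * L * τ))
    (x g : ℕ → EuclideanSpace ℝ (Fin d))
    (h : Fin N → ℕ → EuclideanSpace ℝ (Fin d))
    (hx0 : x 0 = 0)
    (hh0 : ∀ i, h i 0 = 0)
    (hhrec : ∀ i k, h i (k + 1) = if idx k = i then gradient (fi i) (x k) else h i k)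
    (hg : ∀ k, g k = (N : ℝ)⁻¹ • (∑ i, h i k)
      + (N : ℝ)⁻¹ • (gradient (fi (idx k)) (x k) - h (idx k) k))
    (hxrec : ∀ k, x (k + 1) = x k - α • g k) :
    ∀ k : ℕ, k ≤ τ → ‖x k‖ ≤ B := by
  lift L to ℝ≥0 using hL.le
  have hrun : IsSAGRun (fun i => gradient (fi i)) idx α x g h :=
    ⟨hx0, hh0, hhrec, by simpa only [Fintype.card_fin] using hg, hxrec⟩
  have hxistar (i : Fin N) : ‖xistar i‖ ≤ B :=
    hB ▸ le_max_of_le_right (le_ciSup (Set.finite_range fun i => ‖xistar i‖).bddAbove i)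
  have hstep : 2 * L * |α| * τ ≤ 1 := by
    rw [hα, abs_of_nonneg (by positivity)]
    field_simp
    norm_num
  exact sag_bounded_iterates_general hrun (fun i => lipschitzWith_iff_norm_sub_le.2 (hsmooth i))
    (fun i => gradient_eq_zero_of_isLocalMin (.of_forall (hxi i))) hxistar hstep
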